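/- Let 0=t₀<t₁<⋯<t_N be time levels with positive steps τ_k = t_k − t_{k−1}, maximum step τ, and step ratios r_k = τ_k/τ_{k−1} (2≤k≤N), r₁ = 0. Suppose there is R' < R₃ with 0 < r_k ≤ R' for all 2 ≤ k ≤ N, where R₃ is the unique positive root of R⁶+R⁵−4R⁴−8R³−10R²−6R−2 = 0. Then there exists a constant C₃ > 0 depending only on R' (independent of N and of the step sizes) with the following property: if f : ℝ×ℝ → ℝ satisfies |f(t,u) − f(t,w)| ≤ L_f|u − w| with L_f > 0, {v^n}, {v̄^n} are real sequences, ṽ^n = v̄^n − v^n satisfies D₃ṽ^i = f(t_i, v̄^i) − f(t_i, v^i) + ε^i for 3 ≤ i ≤ N, and τ ≤ 1/(4C₃L_f), then for every 3 ≤ n ≤ N, |ṽ^n| ≤ 2·exp(4C₃L_f·t_{n−1})·(|ṽ^2| + 5C₃τ|∂_τṽ^2| + 2C₃τ|∂_τṽ^1| + 2C₃t_n·max_{3≤i≤n}|ε^i|). -/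

import Mathlib

/-- BDF coefficient function `d₀(x,y)`. -/
noncomputable def d0 (x y : ℝ) : ℝ := (1 + 2*x)/(1 + x) + x*y/(1 + y + x*y)

/-- BDF coefficient function `d₁(x,y)`. -/
noncomputable def d1 (x y : ℝ) : ℝ :=
  -(x/(1 + x)) - x*y/(1 + y + x*y) - (x*y^2/(1 + y + x*y)) * ((1 + x)/(1 + y))

/-- BDF coefficient function `d₂(x,y)`. -/
noncomputable def d2 (x y : ℝ) : ℝ := (x*y^2/(1 + y + x*y)) * ((1 + x)/(1 + y))

lemma aux_R3 (R : ℝ) (h0 : R^6 + R^5 - 4*R^4 - 8*R^3 - 10*R^2 - 6*R - 2 = 0) : R < 13/5 := by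
  by_contra h
  push Not at h
  obtain ⟨s, hs, rfl⟩ : ∃ s : ℝ, 0 ≤ s ∧ R = s + 13/5 := ⟨R - 13/5, by linarith, by ring⟩
  ring_nf at h0
  have h2 := pow_nonneg hs 2
  have h3 := pow_nonneg hs 3
  have h4 := pow_nonneg hs 4
  have h5 := pow_nonneg hs 5
  have h6 := pow_nonneg hs 6
  linarith

noncomputable def auxQ (x : ℝ) : ℝ := d2 (13/5) x

lemma aux_d2_le (x y : ℝ) (hx : 0 < x) (hy : 0 < y) (hx2 : x ≤ 13/5) : d2 x y ≤ auxQ y := by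
  unfold auxQ d2
  rw [div_mul_div_comm, div_mul_div_comm, div_le_div_iff₀ (by positivity) (by positivity)]
  have key : x*(1+x)*(1+y+13/5*y) ≤ (13/5)*(1+13/5)*(1+y+x*y) := by
    nlinarith [mul_nonneg hx.le hy.le, mul_nonneg (sub_nonneg.2 hx2) hx.le,
      mul_nonneg (mul_nonneg (sub_nonneg.2 hx2) hx.le) hy.le, mul_nonneg (sub_nonneg.2 hx2) hy.le]
  have : 0 ≤ y^2*(1+y) := by positivity
  nlinarith [mul_le_mul_of_nonneg_left key this]

lemma aux_d2_nonneg (x y : ℝ) (hx : 0 < x) (hy : 0 < y) : 0 ≤ d2 x y := by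
  unfold d2; positivity

lemma aux_Q_nonneg (y : ℝ) (hy : 0 < y) : 0 ≤ auxQ y := aux_d2_nonneg _ _ (by norm_num) hy

lemma aux_Q_le (y : ℝ) (hy : 0 < y) (hy2 : y ≤ 13/5) : auxQ y ≤ 2 := by
  unfold auxQ d2
  rw [div_mul_div_comm, div_le_iff₀ (by positivity)]
  nlinarith [mul_nonneg (sub_nonneg.2 hy2) hy.le]

lemma aux_d0_ge (x y : ℝ) (hx : 0 < x) (hy : 0 < y) : 1 ≤ d0 x y := by
  unfold d0
  have : 1 ≤ (1+2*x)/(1+x) := by rw [le_div_iff₀ (by positivity)]; linarith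
  have : 0 ≤ x*y/(1+y+x*y) := by positivity
  linarith

lemma aux_d0_le (x y : ℝ) (hx : 0 < x) (hy : 0 < y) : d0 x y ≤ 3 := by
  unfold d0
  have : (1+2*x)/(1+x) ≤ 2 := by rw [div_le_iff₀ (by positivity)]; linarith
  have : x*y/(1+y+x*y) ≤ 1 := by rw [div_le_iff₀ (by positivity)]; linarith
  linarith

lemma aux_sum (x y : ℝ) (hx : 0 < x) : d1 x y = 1 - d0 x y - d2 x y := by
  unfold d0 d1 d2
  have : (1+2*x)/(1+x) = 1 + x/(1+x) := by field_simp; ring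
  rw [this]; ring

lemma aux_gap (x y : ℝ) (hx : 0 < x) (hy : 0 < y) (hx2 : x ≤ 13/5) (hy2 : y ≤ 13/5) :
    3/10 ≤ 2 * d0 x y - 1 - d2 x y - auxQ x := by
  have hh : 7/10 ≤ 2*((1+2*x)/(1+x)) - 1 - auxQ x := by
    have e : 2*((1+2*x)/(1+x)) - 1 - auxQ x - 7/10
        = (3/10 + 338/100*x - 108/100*x^2)/((1+x)*(1+x+13/5*x)) := by
      unfold auxQ d2
      field_simp; ring
    have : 0 ≤ (3/10 + 338/100*x - 108/100*x^2)/((1+x)*(1+x+13/5*x)) := by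
      apply div_nonneg _ (by positivity)
      nlinarith
    linarith
  have hk : -(2/5) ≤ 2*(x*y/(1+y+x*y)) - d2 x y := by
    have e : 2*(x*y/(1+y+x*y)) - d2 x y + 2/5
        = (x*y*(2+y-x*y) + 2/5*(1+y+x*y)*(1+y))/((1+y+x*y)*(1+y)) := by
      unfold d2
      field_simp; ring
    have : 0 ≤ (x*y*(2+y-x*y) + 2/5*(1+y+x*y)*(1+y))/((1+y+x*y)*(1+y)) := by
      apply div_nonneg _ (by positivity)
      have a1 : 0 ≤ (13/5-x)*(x*y^2) := mul_nonneg (by linarith) (by positivity)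
      have a2 : 0 ≤ (13/5-x)*(13/5-y)*y := mul_nonneg (mul_nonneg (by linarith) (by linarith)) hy.le
      have a3 : 0 ≤ (13/5-y)*y := mul_nonneg (by linarith) hy.le
      have a4 : 0 ≤ (13/5-y)*y*x := mul_nonneg a3 hx.le
      nlinarith [mul_pos hx hy]
    linarith
  have : d0 x y = (1+2*x)/(1+x) + x*y/(1+y+x*y) := rfl
  rw [this]; linarith

noncomputable def auxE (x a b : ℝ) : ℝ := a^2 + (auxQ x + 3/40) * (a-b)^2

lemma auxE_nonneg (x a b : ℝ) (hx : 0 < x) : 0 ≤ auxE x a b := by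
  have := aux_Q_nonneg x hx
  unfold auxE; positivity

lemma aux_step (x y a b c g : ℝ) (hx : 0 < x) (hy : 0 < y) (hx2 : x ≤ 13/5) (hy2 : y ≤ 13/5)
    (h : d0 x y * a + d1 x y * b + d2 x y * c = g) :
    201/200 * auxE x a b ≤ auxE y b c + 14 * g^2 := by
  rw [aux_sum x y hx] at h
  have h1 := aux_gap x y hx hy hx2 hy2
  have h2 := aux_d0_ge x y hx hy
  have h3 := aux_d0_le x y hx hy
  have h4 := aux_d2_nonneg x y hx hy
  have h5 := aux_d2_le x y hx hy hx2
  have h6 := aux_Q_nonneg x hx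
  have h7 := aux_Q_le x hx hx2
  have h8 := aux_Q_le y hy hy2
  unfold auxE
  generalize d0 x y = D at *
  generalize d2 x y = q at *
  generalize auxQ x = A at *
  generalize auxQ y = B at *
  obtain ⟨p, rfl⟩ : ∃ p, D = 1 + p := ⟨D - 1, by ring⟩
  obtain ⟨z, rfl⟩ : ∃ z, b = a - z := ⟨a - b, by ring⟩
  obtain ⟨z', rfl⟩ : ∃ z', c = a - z - z' := ⟨a - z - c, by ring⟩
  have ha : a = g - p*z + q*z' := by linear_combination h
  have e1 : a - (a - z) = z := by ring
  have e2 : a - z - (a - z - z') = z' := by ring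
  rw [e1, e2]
  have hz := sq_nonneg z
  have hz' := sq_nonneg z'
  have hp2 : (p*z)^2 ≤ 4*z^2 := by
    rw [mul_pow]; apply mul_le_mul_of_nonneg_right _ hz; nlinarith
  have hq2 : (q*z')^2 ≤ 4*z'^2 := by
    rw [mul_pow]; apply mul_le_mul_of_nonneg_right _ hz'; nlinarith
  have hw : a^2 ≤ 3*(g^2 + (p*z)^2 + (q*z')^2) := by
    rw [ha]; nlinarith [sq_nonneg (g + p*z), sq_nonneg (g - q*z'), sq_nonneg (p*z + q*z')]
  have hen : a^2 - (a-z)^2 + (1+2*p)*z^2 - 2*q*z*z' = 2*z*g := by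
    linear_combination (2*z)*ha
  have hqz : 2*q*z*z' ≤ q*z^2 + q*z'^2 := by nlinarith [mul_nonneg h4 (sq_nonneg (z - z'))]
  have hg : 2*z*g ≤ 3/40*z^2 + 40/3*g^2 := by nlinarith [sq_nonneg (3*z - 40*g)]
  have hgap : 0 ≤ (2*(1+p) - 1 - q - A - 3/10)*z^2 := mul_nonneg (by linarith) hz
  have hB : 0 ≤ (B - q)*z'^2 := mul_nonneg (by linarith) hz'
  have hA : 0 ≤ (2 - A)*z^2 := mul_nonneg (by linarith) hz
  have hgg := sq_nonneg g
  nlinarith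

lemma aux_sqrt (E F g : ℝ) (hF : 0 ≤ F) (h : 201/200 * E ≤ F + 14 * g^2) :
    √E ≤ 499/500 * √F + 4 * |g| := by
  apply Real.sqrt_le_iff.2
  have h1 := Real.sqrt_nonneg F
  have h2 := abs_nonneg g
  refine ⟨by positivity, ?_⟩
  have h3 := Real.sq_sqrt hF
  have h4 := sq_abs g
  nlinarith [mul_nonneg h1 h2]

/-- Abstract discrete Gronwall argument. -/
lemma aux_gronwall (m : ℕ) (a e T s M : ℕ → ℝ) (L ep τm : ℝ) (hL : 0 < L) (hep : 0 ≤ ep)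
    (hτm : 0 ≤ τm) (hLτ : L * τm ≤ 1/8000)
    (ha0 : ∀ k, 0 ≤ a k) (he0 : ∀ k, k ≤ m + 1 → 0 ≤ e k)
    (hM0 : M 0 = a 0) (hM : ∀ k, M (k+1) = max (M k) (a (k+1)))
    (hT : ∀ k, k ≤ m → 0 < T k ∧ T k ≤ τm ∧ T k = s (k+1) - s k)
    (hs0 : 0 ≤ s 0)
    (he : ∀ k, k ≤ m → e (k+1) ≤ 499/500 * e k + 4 * (L * a (k+1) + ep))
    (ha : ∀ k, k ≤ m → a (k+1) ≤ a k + T k * e (k+1)) :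
    a (m+1) ≤ 2 * Real.exp (8000 * L * s m) * (a 0 + 500 * τm * e 0 + 4000 * s (m+1) * ep) := by
  have hMa : ∀ k, a k ≤ M k := by
    intro k; cases k with
    | zero => exact hM0.ge
    | succ k => rw [hM]; exact le_max_right _ _
  have hMm : ∀ k, M k ≤ M (k+1) := fun k => by rw [hM]; exact le_max_left _ _
  have hMnn : ∀ k, 0 ≤ M k := fun k => (ha0 k).trans (hMa k)
  have hE : ∀ k, k ≤ m + 1 → e k ≤ (499/500)^k * e 0 + 2000 * (L * M k + ep) := by
    intro k
    induction k with
    | zero => intro _; have := mul_nonneg hL.le (hMnn 0); simp; positivity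
    | succ k ih =>
      intro hk
      have h1 := ih (by omega)
      have h2 := he k (by omega)
      have h3 := mul_le_mul_of_nonneg_left (hMa (k+1)) hL.le
      have h4 := mul_le_mul_of_nonneg_left (hMm k) hL.le
      rw [pow_succ]
      nlinarith
  let W : ℕ → ℝ := fun k => ∑ j ∈ Finset.range k, T j * M (j+1)
  have hW : ∀ k, W (k+1) = W k + T k * M (k+1) := fun k => Finset.sum_range_succ _ _
  have hs : ∀ k, k ≤ m + 1 → s 0 ≤ s k := by
    intro k
    induction k with
    | zero => intro _; exact le_rfl
    | succ k ih => intro hk; have := ih (by omega); have := hT k (by omega); linarith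
  let S : ℕ → ℝ := fun k => a 0 + 500 * τm * e 0 * (1 - (499/500)^k) + 2000 * ep * (s k - s 0)
      + 2000 * L * W k
  have hstep : ∀ k, k ≤ m → S k + T k * e (k+1) ≤ S (k+1) := by
    intro k hk
    obtain ⟨t1, t2, t3⟩ := hT k hk
    have h1 := mul_le_mul_of_nonneg_left (hE (k+1) (by omega)) t1.le
    have hp : (0:ℝ) ≤ (499/500)^k * e 0 := mul_nonneg (by positivity) (he0 0 (by omega))
    have h2 := mul_le_mul_of_nonneg_right t2 hp
    simp only [S, hW]
    rw [pow_succ] at *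
    have h3 : s (k+1) = s k + T k := by linarith
    rw [h3]
    nlinarith
  have hSmono : ∀ k, k ≤ m → S k ≤ S (k+1) := fun k hk => by
    have := mul_nonneg (hT k hk).1.le (he0 (k+1) (by omega)); have := hstep k hk; linarith
  have hS0 : S 0 = a 0 := by simp [S, W]
  have haS : ∀ k, k ≤ m + 1 → a k ≤ S k ∧ M k ≤ S k := by
    intro k
    induction k with
    | zero => intro _; rw [hS0, hM0]; exact ⟨le_rfl, le_rfl⟩
    | succ k ih =>
      intro hk
      obtain ⟨i1, i2⟩ := ih (by omega)
      have h1 := ha k (by omega)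
      have h2 := hstep k (by omega)
      have h3 := hSmono k (by omega)
      refine ⟨by linarith, ?_⟩
      rw [hM]; exact max_le (by linarith) (by linarith)
  have he00 := he0 0 (by omega)
  have hsm : s m ≤ s (m+1) := by have := hT m le_rfl; linarith
  obtain ⟨A, hA⟩ : ∃ A, A = a 0 + 500 * τm * e 0 + 4000 * s (m+1) * ep := ⟨_, rfl⟩
  have hA0 : 0 ≤ A := by
    have := ha0 0
    have := hs (m+1) le_rfl
    have : 0 ≤ s (m+1) := by linarith
    rw [hA]; positivity
  have hsle : ∀ k, k ≤ m + 1 → s k ≤ s (m+1) := by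
    intro k hk
    obtain ⟨d, hd⟩ := Nat.exists_eq_add_of_le hk
    induction d generalizing k with
    | zero => rw [hd]; rfl
    | succ d ih =>
      have := ih (k+1) (by omega) (by omega)
      have := hT k (by omega)
      linarith
  have hMW : ∀ k, k ≤ m + 1 → M k ≤ A + 2000 * L * W k := by
    intro k hk
    have h1 := (haS k hk).2
    have h2 : 0 ≤ 500 * τm * e 0 * (499/500)^k := by positivity
    have h3 : 0 ≤ ep * (s (m+1) - s k) := mul_nonneg hep (by linarith [hsle k hk])
    have h4 : 0 ≤ ep * s 0 := mul_nonneg hep hs0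
    have h5 : 0 ≤ ep * s (m+1) := mul_nonneg hep (by linarith [hs (m+1) le_rfl])
    simp only [S] at h1
    rw [hA]
    nlinarith
  have hWn : ∀ k, k ≤ m + 1 → 0 ≤ W k := by
    intro k hk
    apply Finset.sum_nonneg
    intro j hj
    exact mul_nonneg (hT j (by have := Finset.mem_range.1 hj; omega)).1.le (hMnn _)
  have hone : ∀ k, k ≤ m → A + 2000*L*W (k+1) ≤ (1 + 8000*L*T k) * (A + 2000*L*W k) := by
    intro k hk
    obtain ⟨t1, t2, t3⟩ := hT k hk
    have h1 := hMW (k+1) (by omega)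
    have hLT : L * T k ≤ 1/8000 := (mul_le_mul_of_nonneg_left t2 hL.le).trans hLτ
    have hLT0 : 0 < L * T k := mul_pos hL t1
    have h2 : A + 2000*L*W (k+1) = (A + 2000*L*W k) + 2000*(L*T k)*M (k+1) := by rw [hW]; ring
    have h3 : 0 ≤ A + 2000*L*W k := by have := hWn k (by omega); positivity
    generalize A + 2000*L*W (k+1) = X at *
    generalize A + 2000*L*W k = Y at *
    have h4 : X ≤ Y + 2000*(L*T k)*X := by
      have := mul_le_mul_of_nonneg_left h1 hLT0.le
      nlinarith
    have : 8000*L*T k = 8000*(L*T k) := by ring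
    rw [this]
    generalize L*T k = u at *
    have h5 : (1-2000*u)*X ≤ Y := by linarith
    have h6 : Y ≤ (1-2000*u)*((1+8000*u)*Y) := by
      have : 0 ≤ (6000*u - 16000000*u^2)*Y := mul_nonneg (by nlinarith) h3
      nlinarith
    exact le_of_mul_le_mul_left (h5.trans h6) (by linarith)
  have hexp : ∀ k, k ≤ m → A + 2000*L*W k ≤ A * Real.exp (8000*L*(s k - s 0)) := by
    intro k
    induction k with
    | zero => intro _; simp [W]
    | succ k ih =>
      intro hk
      have h1 := ih (by omega)
      have h2 := hone k (by omega)
      obtain ⟨t1, t2, t3⟩ := hT k (by omega)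
      have h3 : 1 + 8000*L*T k ≤ Real.exp (8000*L*T k) := by
        have := Real.add_one_le_exp (8000*L*T k); linarith
      have h4 : 8000*L*(s (k+1) - s 0) = 8000*L*T k + 8000*L*(s k - s 0) := by rw [t3]; ring
      rw [h4, Real.exp_add]
      have h5 : 0 ≤ A + 2000*L*W k := by have := hWn k (by omega); positivity
      calc _ ≤ _ := h2
        _ ≤ Real.exp (8000*L*T k) * (A * Real.exp (8000*L*(s k - s 0))) :=
          mul_le_mul h3 h1 h5 (Real.exp_pos _).le
        _ = _ := by ring
  have f1 := hexp m le_rfl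
  have f2 := hone m le_rfl
  obtain ⟨t1, t2, t3⟩ := hT m le_rfl
  have f3 : 8000*L*T m ≤ 1 := by
    have := mul_le_mul_of_nonneg_left t2 hL.le; nlinarith
  have f4 : 0 ≤ A + 2000*L*W m := by have := hWn m (by omega); positivity
  have f5 : Real.exp (8000*L*(s m - s 0)) ≤ Real.exp (8000*L*s m) := by
    apply Real.exp_le_exp.2
    have := mul_nonneg hL.le hs0
    nlinarith
  have f6 := mul_le_mul_of_nonneg_left f5 hA0
  have f7 := (hMa (m+1)).trans (hMW (m+1) le_rfl)
  have f8 := mul_le_mul_of_nonneg_right f3 f4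
  rw [← hA]
  nlinarith

/-- Stability of the variable-step BDF3 method (Theorem 3.1): if all step ratios satisfy
`0 < r_k ≤ R' < R₃`, where `R₃` is the unique positive root of
`R⁶+R⁵-4R⁴-8R³-10R²-6R-2 = 0`, then there is a constant `C₃ > 0` depending only on `R'`
such that, whenever `τ ≤ 1/(4 C₃ L_f)`, for `3 ≤ n ≤ N`,
`|ṽⁿ| ≤ 2 exp(4C₃L_f t_{n-1})(|ṽ²| + 5C₃τ|∂_τṽ²| + 2C₃τ|∂_τṽ¹| + 2C₃ t_n max_{3≤i≤n}|εⁱ|)`. -/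
theorem bdf3_stability (R' R3 : ℝ) (hR3pos : 0 < R3)
    (hR3root : R3^6 + R3^5 - 4*R3^4 - 8*R3^3 - 10*R3^2 - 6*R3 - 2 = 0)
    (hR3uniq : ∀ x : ℝ, 0 < x → x^6 + x^5 - 4*x^4 - 8*x^3 - 10*x^2 - 6*x - 2 = 0 → x = R3)
    (hR' : R' < R3) :
    ∃ C3 : ℝ, 0 < C3 ∧
      ∀ (N : ℕ), 3 ≤ N →
      ∀ (t : ℕ → ℝ), t 0 = 0 →
      (∀ k, 1 ≤ k → k ≤ N → t (k - 1) < t k) →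
      ∀ (τ : ℕ → ℝ), (∀ k, 1 ≤ k → k ≤ N → τ k = t k - t (k - 1)) →
      ∀ (τmax : ℝ), (∀ k, 1 ≤ k → k ≤ N → τ k ≤ τmax) →
      ∀ (r : ℕ → ℝ), r 1 = 0 → (∀ k, 2 ≤ k → k ≤ N → r k = τ k / τ (k - 1)) →
      (∀ k, 2 ≤ k → k ≤ N → 0 < r k ∧ r k ≤ R') →
      ∀ (Lf : ℝ), 0 < Lf →
      ∀ (f : ℝ → ℝ → ℝ), (∀ s u w : ℝ, |f s u - f s w| ≤ Lf * |u - w|) →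
      ∀ (v vbar ε vt : ℕ → ℝ), (∀ n, vt n = vbar n - v n) →
      (∀ i, 3 ≤ i → i ≤ N →
        d0 (r i) (r (i - 1)) * ((vt i - vt (i - 1)) / τ i)
          + d1 (r i) (r (i - 1)) * ((vt (i - 1) - vt (i - 2)) / τ (i - 1))
          + d2 (r i) (r (i - 1)) * ((vt (i - 2) - vt (i - 3)) / τ (i - 2))
          = f (t i) (vbar i) - f (t i) (v i) + ε i) →
      τmax ≤ 1/(4*C3*Lf) →
      ∀ n, ∀ hn : 3 ≤ n, n ≤ N →
        |vt n| ≤ 2 * Real.exp (4*C3*Lf*t (n - 1)) *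
          (|vt 2| + 5*C3*τmax*|(vt 2 - vt 1)/τ 2| + 2*C3*τmax*|(vt 1 - vt 0)/τ 1|
            + 2*C3*t n * (Finset.Icc 3 n).sup' (Finset.nonempty_Icc.mpr hn) (fun i => |ε i|)) := by
  have hR : R' ≤ 13/5 := (hR'.trans (aux_R3 R3 hR3root)).le
  refine ⟨2000, by norm_num, ?_⟩
  intro N hN t ht0 htlt τ hτ τmax hτmax r hr1 hr hrb Lf hLf f hf v vbar ε vt hvt heq hsmall n hn hnN
  obtain ⟨m, rfl⟩ : ∃ m, n = m + 3 := ⟨n - 3, by omega⟩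
  have hτpos : ∀ k, 1 ≤ k → k ≤ N → 0 < τ k := fun k h1 h2 => by
    rw [hτ k h1 h2]; linarith [htlt k h1 h2]
  have hτm : 0 < τmax := (hτpos 1 le_rfl (by omega)).trans_le (hτmax 1 le_rfl (by omega))
  have hLτ : Lf * τmax ≤ 1/8000 := by
    rw [le_div_iff₀ (by positivity)] at hsmall
    linarith
  obtain ⟨ep, hepdef⟩ : ∃ ep, ep = (Finset.Icc 3 (m+3)).sup' (Finset.nonempty_Icc.mpr hn)
    (fun i => |ε i|) := ⟨_, rfl⟩
  rw [← hepdef]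
  have hepi : ∀ i, 3 ≤ i → i ≤ m + 3 → |ε i| ≤ ep := fun i h1 h2 => by
    rw [hepdef]
    exact Finset.le_sup' (fun i => |ε i|) (Finset.mem_Icc.2 ⟨h1, h2⟩)
  have hep : 0 ≤ ep := (abs_nonneg _).trans (hepi 3 le_rfl (by omega))
  let w : ℕ → ℝ := fun i => (vt (i+1) - vt i) / τ (i+1)
  let e : ℕ → ℝ := fun k => √(auxE (r (k+2)) (w (k+1)) (w k))
  let M : ℕ → ℝ := fun k => Nat.rec |vt 2| (fun k y => max y |vt (k+1+2)|) k
  have hrr : ∀ k, k ≤ m + 1 → 0 < r (k+2) ∧ r (k+2) ≤ 13/5 := fun k hk => by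
    have := hrb (k+2) (by omega) (by omega)
    exact ⟨this.1, this.2.trans hR⟩
  have ht1 : 0 < t 1 := by have := htlt 1 le_rfl (by omega); simpa [ht0] using this
  have ht2 : t 1 < t 2 := htlt 2 (by omega) (by omega)
  have main := aux_gronwall m (fun k => |vt (k+2)|) e (fun k => τ (k+3)) (fun k => t (k+2)) M
    Lf ep τmax hLf hep hτm.le hLτ (fun k => abs_nonneg _) (fun k _ => Real.sqrt_nonneg _)
    rfl (fun k => rfl)
    (fun k hk => ⟨hτpos _ (by omega) (by omega), hτmax _ (by omega) (by omega),
      hτ (k+3) (by omega) (by omega)⟩)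
    (by show 0 ≤ t 2; linarith)
    (by
      intro k hk
      have h1 := heq (k+3) (by omega) (by omega)
      have h2 := aux_step (r (k+3)) (r (k+2)) (w (k+2)) (w (k+1)) (w k) _
        (hrr (k+1) (by omega)).1 (hrr k (by omega)).1 (hrr (k+1) (by omega)).2
        (hrr k (by omega)).2 h1
      have h3 := aux_sqrt _ _ _ (auxE_nonneg _ _ _ (hrr k (by omega)).1) h2
      have h4 : |f (t (k+3)) (vbar (k+3)) - f (t (k+3)) (v (k+3)) + ε (k+3)|
          ≤ Lf * |vt (k+3)| + ep := by
        refine (abs_add_le _ _).trans (add_le_add ?_ (hepi _ (by omega) (by omega)))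
        rw [hvt]; exact hf _ _ _
      refine h3.trans ?_
      show _ ≤ 499/500 * √(auxE (r (k+2)) (w (k+1)) (w k)) + 4 * (Lf * |vt (k+3)| + ep)
      linarith)
    (by
      intro k hk
      have hp := hτpos (k+3) (by omega) (by omega)
      have h1 : |w (k+2)| ≤ √(auxE (r (k+3)) (w (k+2)) (w (k+1))) := by
        apply Real.abs_le_sqrt
        have := aux_Q_nonneg _ (hrr (k+1) (by omega)).1
        unfold auxE
        have : 0 ≤ (auxQ (r (k+3)) + 3/40) * (w (k+2) - w (k+1))^2 :=
          mul_nonneg (add_nonneg this (by norm_num)) (sq_nonneg _)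
        linarith
      have h2 : vt (k+3) = vt (k+2) + τ (k+3) * w (k+2) := by
        show vt (k+3) = vt (k+2) + τ (k+3) * ((vt (k+3) - vt (k+2)) / τ (k+3))
        field_simp; ring
      show |vt (k+3)| ≤ |vt (k+2)| + τ (k+3) * √(auxE (r (k+3)) (w (k+2)) (w (k+1)))
      rw [h2]
      refine (abs_add_le _ _).trans (add_le_add le_rfl ?_)
      rw [abs_mul, abs_of_pos hp]
      exact mul_le_mul_of_nonneg_left h1 hp.le)
  have he0 : e 0 ≤ 3 * |w 1| + 2 * |w 0| := by
    show √(auxE (r 2) (w 1) (w 0)) ≤ _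
    apply Real.sqrt_le_iff.2
    refine ⟨by positivity, ?_⟩
    have h1 := aux_Q_le _ (hrr 0 (by omega)).1 (hrr 0 (by omega)).2
    have h2 : (auxQ (r 2) + 3/40) * (w 1 - w 0)^2 ≤ 3 * (w 1 - w 0)^2 :=
      mul_le_mul_of_nonneg_right (by simp only [zero_add] at h1; linarith) (sq_nonneg _)
    unfold auxE
    have h3 : (w 1 - w 0)^2 ≤ (|w 1| + |w 0|)^2 := by
      rw [← sq_abs (w 1 - w 0)]
      exact pow_le_pow_left₀ (abs_nonneg _) (abs_sub _ _) 2
    nlinarith [sq_abs (w 1), sq_abs (w 0), abs_nonneg (w 1), abs_nonneg (w 0),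
      mul_nonneg (abs_nonneg (w 1)) (abs_nonneg (w 0))]
  have hw1 : (vt 2 - vt 1)/τ 2 = w 1 := rfl
  have hw0 : (vt 1 - vt 0)/τ 1 = w 0 := rfl
  rw [hw1, hw0]
  have e1 : (4*2000*Lf*t (m+3-1)) = 8000 * Lf * t (m+2) := by
    show (4*2000*Lf*t (m+2)) = _
    ring
  rw [e1]
  refine (show |vt (m+3)| ≤ _ from main).trans ?_
  apply mul_le_mul_of_nonneg_left _ (by positivity)
  show |vt 2| + 500 * τmax * e 0 + 4000 * t (m+3) * ep ≤ _
  have g1 := mul_le_mul_of_nonneg_left he0 hτm.le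
  have g2 := mul_nonneg hτm.le (abs_nonneg (w 1))
  have g3 := mul_nonneg hτm.le (abs_nonneg (w 0))
  nlinarith
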